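/- arXiv:2412.16273 — 6 statements merged into one kernel-verified Lean document; each statement's English description precedes it below -/
import Mathlib

section
/- Let (𝔤,[-,-]₁,[-,-]₂) be a compatible Lie algebra with a representation (ρ,μ,V), and let T : V → 𝔤 be an anti-O-operator associated to (ρ,μ,V). Define bilinear operations on V by u∘v = −ρ(T(u))v and u∗v = −μ(T(u))v. Then for all u,v,w ∈ V the identity u∘(v∗w) + u∗(v∘w) − v∘(u∗w) − v∗(u∘w) = [v,u]₂∘w + [v,u]₁∗w holds, where [u,v]₁ = u∘v − v∘u and [u,v]₂ = u∗v − v∗u. -/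
/-- A bilinear operation is a Lie bracket. -/
def IsLieBr {g : Type*} [AddCommGroup g] [Module ℂ g]
    (b : g →ₗ[ℂ] g →ₗ[ℂ] g) : Prop :=
  (∀ x y : g, b x y = -b y x) ∧
  (∀ x y z : g, b (b x y) z + b (b y z) x + b (b z x) y = 0)

/-- `r` is a representation of the Lie bracket `b` on `V`. -/
def IsRep {g V : Type*} [AddCommGroup g] [Module ℂ g] [AddCommGroup V] [Module ℂ V]
    (b : g →ₗ[ℂ] g →ₗ[ℂ] g) (r : g →ₗ[ℂ] V →ₗ[ℂ] V) : Prop :=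
  ∀ x y : g, r (b x y) = r x ∘ₗ r y - r y ∘ₗ r x

/-- `T` is an anti-O-operator of the Lie algebra `(g, b)` associated to the
representation `r`. -/
def IsAntiO {g V : Type*} [AddCommGroup g] [Module ℂ g] [AddCommGroup V] [Module ℂ V]
    (b : g →ₗ[ℂ] g →ₗ[ℂ] g) (r : g →ₗ[ℂ] V →ₗ[ℂ] V) (T : V →ₗ[ℂ] g) : Prop :=
  ∀ u v : V, b (T u) (T v) = T (r (T v) u - r (T u) v)

/-- Let `(g,b₁,b₂)` be a compatible Lie algebra, `(ρ,μ,V)` a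
representation, and `T : V → g` an anti-O-operator. With `u∘v = −ρ(T u)v` and
`u∗v = −μ(T u)v`, the identity
`u∘(v∗w) + u∗(v∘w) − v∘(u∗w) − v∗(u∘w) = [v,u]₂∘w + [v,u]₁∗w` holds on `V`. -/
theorem antiO_induced_mixed_identity {g V : Type*} [AddCommGroup g] [Module ℂ g]
    [AddCommGroup V] [Module ℂ V]
    (b₁ b₂ : g →ₗ[ℂ] g →ₗ[ℂ] g)
    (hcompat : ∀ k₁ k₂ : ℂ, IsLieBr (k₁ • b₁ + k₂ • b₂))
    (ρ μ : g →ₗ[ℂ] V →ₗ[ℂ] V)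
    (hrep : ∀ k₁ k₂ : ℂ, IsRep (k₁ • b₁ + k₂ • b₂) (k₁ • ρ + k₂ • μ))
    (T : V →ₗ[ℂ] g)
    (hT : ∀ k₁ k₂ : ℂ, IsAntiO (k₁ • b₁ + k₂ • b₂) (k₁ • ρ + k₂ • μ) T)
    (c s : V → V → V)
    (hc : ∀ u v : V, c u v = -(ρ (T u) v))
    (hs : ∀ u v : V, s u v = -(μ (T u) v)) :
    ∀ u v w : V,
      c u (s v w) + s u (c v w) - c v (s u w) - s v (c u w)
        = c (s v u - s u v) w + s (c v u - c u v) w := by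
  intro u v w
  have h1 := hT 1 0 u v
  have h2 := hT 0 1 u v
  have r1 := LinearMap.congr_fun (hrep 1 0 (T u) (T v)) w
  have r2 := LinearMap.congr_fun (hrep 0 1 (T u) (T v)) w
  have r3 := LinearMap.congr_fun (hrep 1 1 (T u) (T v)) w
  simp only [one_smul, zero_smul, add_zero, zero_add, LinearMap.add_apply, LinearMap.sub_apply,
    LinearMap.comp_apply, map_add, map_sub] at h1 h2 r1 r2 r3
  simp only [h1, h2, map_sub, LinearMap.sub_apply] at r1 r2 r3
  simp only [hc, hs, map_neg, map_sub, LinearMap.neg_apply, LinearMap.sub_apply, neg_neg]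
  linear_combination (norm := abel) r1 + r2 - r3
end

section
/- Let (𝔤,[-,-]₁,[-,-]₂) be a compatible Lie algebra with a representation (ρ,μ,V), let T : V → 𝔤 be an anti-O-operator associated to (ρ,μ,V), and define u∘v = −ρ(T(u))v and u∗v = −μ(T(u))v on V. Then (V,∘,∗) is a compatible anti-pre-Lie algebra if and only if T is strong, i.e., for all k₁,k₂ ∈ ℂ and all u,v,w ∈ V, (k₁ρ+k₂μ)([T(u),T(v)]_{k})w + (k₁ρ+k₂μ)([T(v),T(w)]_{k})u + (k₁ρ+k₂μ)([T(w),T(u)]_{k})v = 0, where [-,-]_{k} = k₁[-,-]₁ + k₂[-,-]₂. -/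
/-- An anti-pre-Lie algebra structure. -/
def IsAntiPreLie {A : Type*} [AddCommGroup A] [Module ℂ A]
    (m : A →ₗ[ℂ] A →ₗ[ℂ] A) : Prop :=
  (∀ x y z : A, m x (m y z) - m y (m x z) = m (m y x - m x y) z) ∧
  (∀ x y z : A, m (m x y - m y x) z + m (m y z - m z y) x + m (m z x - m x z) y = 0)

theorem antiO_single_aux {g V : Type*} [AddCommGroup g]
    [Module ℂ g] [AddCommGroup V] [Module ℂ V]
    (b : g →ₗ[ℂ] g →ₗ[ℂ] g) (hb : IsLieBr b)
    (r : g →ₗ[ℂ] V →ₗ[ℂ] V) (hr : IsRep b r)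
    (T : V →ₗ[ℂ] g) (hT : IsAntiO b r T)
    (m : V →ₗ[ℂ] V →ₗ[ℂ] V) (hm : ∀ u v : V, m u v = -(r (T u) v)) :
    IsAntiPreLie m ↔ ∀ u v w : V,
      r (b (T u) (T v)) w + r (b (T v) (T w)) u + r (b (T w) (T u)) v = 0 := by
  have key : ∀ x y z : V, m (m x y - m y x) z = -(r (b (T x) (T y)) z) := by
    intro x y z
    rw [hm (m x y - m y x) z, hT x y, hm x y, hm y x]
    congr 4
    abel
  constructor
  · intro h u v w
    have h2 := h.2 u v w
    rw [key, key, key, ← neg_add, ← neg_add, neg_eq_zero] at h2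
    exact h2
  · intro h
    refine ⟨fun x y z => ?_, fun x y z => ?_⟩
    · rw [key, hb.1 (T y) (T x), map_neg, hr (T x) (T y)]
      simp [hm]
    · rw [key, key, key, ← neg_add, ← neg_add, neg_eq_zero]
      exact h x y z

/-- Let `(g,b₁,b₂)` be a compatible Lie algebra, `(ρ,μ,V)` a
representation, and `T : V → g` an anti-O-operator. With `u∘v = −ρ(T u)v` and
`u∗v = −μ(T u)v` on `V`, `(V,∘,∗)` is a compatible anti-pre-Lie algebra iff `T` is
strong: for all `k₁,k₂` and `u,v,w`,
`(k₁ρ+k₂μ)([Tu,Tv]ₖ)w + (k₁ρ+k₂μ)([Tv,Tw]ₖ)u + (k₁ρ+k₂μ)([Tw,Tu]ₖ)v = 0`. -/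
theorem antiO_compatible_antiPreLie_iff_strong {g V : Type*} [AddCommGroup g]
    [Module ℂ g] [AddCommGroup V] [Module ℂ V]
    (b₁ b₂ : g →ₗ[ℂ] g →ₗ[ℂ] g)
    (hcompat : ∀ k₁ k₂ : ℂ, IsLieBr (k₁ • b₁ + k₂ • b₂))
    (ρ μ : g →ₗ[ℂ] V →ₗ[ℂ] V)
    (hrep : ∀ k₁ k₂ : ℂ, IsRep (k₁ • b₁ + k₂ • b₂) (k₁ • ρ + k₂ • μ))
    (T : V →ₗ[ℂ] g)
    (hT : ∀ k₁ k₂ : ℂ, IsAntiO (k₁ • b₁ + k₂ • b₂) (k₁ • ρ + k₂ • μ) T)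
    (C S : V →ₗ[ℂ] V →ₗ[ℂ] V)
    (hC : ∀ u v : V, C u v = -(ρ (T u) v))
    (hS : ∀ u v : V, S u v = -(μ (T u) v)) :
    (∀ k₁ k₂ : ℂ, IsAntiPreLie (k₁ • C + k₂ • S)) ↔
      (∀ (k₁ k₂ : ℂ) (u v w : V),
        (k₁ • ρ + k₂ • μ) ((k₁ • b₁ + k₂ • b₂) (T u) (T v)) w
          + (k₁ • ρ + k₂ • μ) ((k₁ • b₁ + k₂ • b₂) (T v) (T w)) u
          + (k₁ • ρ + k₂ • μ) ((k₁ • b₁ + k₂ • b₂) (T w) (T u)) v = 0) := by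
  have key := fun k₁ k₂ : ℂ => antiO_single_aux _ (hcompat k₁ k₂) _ (hrep k₁ k₂) T (hT k₁ k₂)
    (k₁ • C + k₂ • S) (by
      intro u v
      simp only [LinearMap.add_apply, LinearMap.smul_apply, hC, hS, smul_neg, neg_add])
  exact ⟨fun h k₁ k₂ => (key k₁ k₂).1 (h k₁ k₂), fun h k₁ k₂ => (key k₁ k₂).2 (h k₁ k₂)⟩
end

section
/- Let (𝔤,[-,-]₁,[-,-]₂) be a compatible Lie algebra and R : 𝔤 → 𝔤 a strong anti-Rota-Baxter operator, i.e., for each bracket [-,-]_{k} = k₁[-,-]₁+k₂[-,-]₂ (k₁,k₂ ∈ ℂ) one has [R(x),R(y)]_{k} = R([R(y),x]_{k} + [y,R(x)]_{k}) and [[R(x),R(y)]_{k},z]_{k} + [[R(y),R(z)]_{k},x]_{k} + [[R(z),R(x)]_{k},y]_{k} = 0 for all x,y,z ∈ 𝔤. Then the operations x∘y = −[R(x),y]₁ and x∗y = −[R(x),y]₂ make (𝔤,∘,∗) a compatible anti-pre-Lie algebra. -/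
theorem antiPreLie_aux {g : Type*} [AddCommGroup g] [Module ℂ g]
    (b m : g →ₗ[ℂ] g →ₗ[ℂ] g) (hb : IsLieBr b) (R : g →ₗ[ℂ] g)
    (hR : ∀ x y : g, b (R x) (R y) = R (b (R y) x + b y (R x)))
    (hs : ∀ x y z : g, b (b (R x) (R y)) z + b (b (R y) (R z)) x + b (b (R z) (R x)) y = 0)
    (hm : ∀ x y : g, m x y = -(b (R x) y)) : IsAntiPreLie m := by
  obtain ⟨ha, hj⟩ := hb
  have key : ∀ x y z : g, m (m y x - m x y) z = b (b (R x) (R y)) z := by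
    intro x y z
    have e : m y x - m x y = -(b (R y) x + b y (R x)) := by
      rw [hm, hm, ha y (R x)]; abel
    rw [e, hm, map_neg, ← hR, map_neg, LinearMap.neg_apply, neg_neg]
  refine ⟨fun x y z => ?_, fun x y z => ?_⟩
  · rw [key]
    have h := hj (R x) (R y) z
    rw [ha (b (R y) z) (R x), ha (b z (R x)) (R y), ha z (R x), map_neg, neg_neg] at h
    simp only [hm, map_neg, neg_neg]
    rw [← sub_eq_zero, ← neg_eq_zero, ← h]
    abel
  · rw [key, key, key]
    have h := hs y x z
    rw [← h]
    abel

/-- Let `(g,b₁,b₂)` be a compatible Lie algebra and `R` a strong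
anti-Rota-Baxter operator (for every bracket `bₖ = k₁b₁+k₂b₂`). Then
`x∘y = −[Rx,y]₁`, `x∗y = −[Rx,y]₂` define a compatible anti-pre-Lie algebra. -/
theorem strong_antiRotaBaxter_gives_compatible_antiPreLie {g : Type*} [AddCommGroup g]
    [Module ℂ g] (b₁ b₂ : g →ₗ[ℂ] g →ₗ[ℂ] g)
    (hcompat : ∀ k₁ k₂ : ℂ, IsLieBr (k₁ • b₁ + k₂ • b₂))
    (R : g →ₗ[ℂ] g)
    (hR : ∀ (k₁ k₂ : ℂ) (x y : g),
      (k₁ • b₁ + k₂ • b₂) (R x) (R y)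
        = R ((k₁ • b₁ + k₂ • b₂) (R y) x + (k₁ • b₁ + k₂ • b₂) y (R x)))
    (hstrong : ∀ (k₁ k₂ : ℂ) (x y z : g),
      (k₁ • b₁ + k₂ • b₂) ((k₁ • b₁ + k₂ • b₂) (R x) (R y)) z
        + (k₁ • b₁ + k₂ • b₂) ((k₁ • b₁ + k₂ • b₂) (R y) (R z)) x
        + (k₁ • b₁ + k₂ • b₂) ((k₁ • b₁ + k₂ • b₂) (R z) (R x)) y = 0)
    (C S : g →ₗ[ℂ] g →ₗ[ℂ] g)
    (hC : ∀ x y : g, C x y = -(b₁ (R x) y))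
    (hS : ∀ x y : g, S x y = -(b₂ (R x) y)) :
    ∀ k₁ k₂ : ℂ, IsAntiPreLie (k₁ • C + k₂ • S) := by
  intro k₁ k₂
  refine antiPreLie_aux (k₁ • b₁ + k₂ • b₂) _ (hcompat k₁ k₂) R (hR k₁ k₂) (hstrong k₁ k₂) ?_
  intro x y
  simp only [LinearMap.add_apply, LinearMap.smul_apply, hC, hS, smul_neg, neg_add]
end

section
/- Let (𝔤,[-,-]₁,[-,-]₂) be a compatible Lie algebra and R : 𝔤 → 𝔤 a linear map such that the operations x∘y = −[R(x),y]₁ and x∗y = −[R(x),y]₂ make (𝔤,∘,∗) a compatible anti-pre-Lie algebra. Then for every k₁,k₂ ∈ ℂ, writing [-,-]_{k} = k₁[-,-]₁+k₂[-,-]₂, R satisfies [[R(x),R(y)]_{k},z]_{k} + [[R(y),R(z)]_{k},x]_{k} + [[R(z),R(x)]_{k},y]_{k} = 0 and [[R(x),R(y)]_{k} + R([x,R(y)]_{k} + [R(x),y]_{k}), z]_{k} = 0 for all x,y,z ∈ 𝔤. -/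
theorem strong_aux {g : Type*} [AddCommGroup g] [Module ℂ g]
    (b m : g →ₗ[ℂ] g →ₗ[ℂ] g) (hb : IsLieBr b) (R : g →ₗ[ℂ] g)
    (hm : ∀ x y : g, m x y = -(b (R x) y)) (hA : IsAntiPreLie m) (x y z : g) :
    (b (b (R x) (R y)) z + b (b (R y) (R z)) x + b (b (R z) (R x)) y = 0) ∧
      b (b (R x) (R y) + R (b x (R y) + b (R x) y)) z = 0 := by
  obtain ⟨hs, hj⟩ := hb
  obtain ⟨h1, h2⟩ := hA
  have key : ∀ x y z : g, b (b (R x) (R y)) z = b (R (b (R y) x)) z - b (R (b (R x) y)) z := by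
    intro x y z
    have e1 := h1 x y z
    have e2 := hj (R x) (R y) z
    rw [hs (b (R y) z) (R x), hs (b z (R x)) (R y), hs z (R x)] at e2
    simp only [hm, map_sub, map_neg, LinearMap.sub_apply, LinearMap.neg_apply, neg_neg] at e1 e2
    have e3 : b (b (R x) (R y)) z = b (R x) (b (R y) z) - b (R y) (b (R x) z) := by
      rw [← sub_eq_zero, ← e2]; abel
    rw [e3, e1]
  constructor
  · have e := h2 x y z
    simp only [hm, map_sub, map_neg, LinearMap.sub_apply, LinearMap.neg_apply, neg_neg] at e
    rw [key, key, key, ← neg_eq_zero, ← e]; abel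
  · rw [hs x (R y)]
    simp only [map_add, map_neg, LinearMap.add_apply, LinearMap.neg_apply]
    rw [key]; abel

/-- Let `(g,b₁,b₂)` be a compatible Lie algebra and `R : g → g` a linear
map such that `x∘y = −[Rx,y]₁`, `x∗y = −[Rx,y]₂` define a compatible anti-pre-Lie
algebra. Then for every `k₁,k₂`, writing `bₖ = k₁b₁+k₂b₂`, `R` satisfies the strong
condition `[[Rx,Ry]ₖ,z]ₖ + [[Ry,Rz]ₖ,x]ₖ + [[Rz,Rx]ₖ,y]ₖ = 0` and
`[[Rx,Ry]ₖ + R([x,Ry]ₖ + [Rx,y]ₖ), z]ₖ = 0`. -/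
theorem compatible_antiPreLie_from_R_implies_strong {g : Type*} [AddCommGroup g]
    [Module ℂ g] (b₁ b₂ : g →ₗ[ℂ] g →ₗ[ℂ] g)
    (hcompat : ∀ k₁ k₂ : ℂ, IsLieBr (k₁ • b₁ + k₂ • b₂))
    (R : g →ₗ[ℂ] g)
    (C S : g →ₗ[ℂ] g →ₗ[ℂ] g)
    (hC : ∀ x y : g, C x y = -(b₁ (R x) y))
    (hS : ∀ x y : g, S x y = -(b₂ (R x) y))
    (hAPL : ∀ k₁ k₂ : ℂ, IsAntiPreLie (k₁ • C + k₂ • S)) :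
    ∀ (k₁ k₂ : ℂ) (x y z : g),
      ((k₁ • b₁ + k₂ • b₂) ((k₁ • b₁ + k₂ • b₂) (R x) (R y)) z
          + (k₁ • b₁ + k₂ • b₂) ((k₁ • b₁ + k₂ • b₂) (R y) (R z)) x
          + (k₁ • b₁ + k₂ • b₂) ((k₁ • b₁ + k₂ • b₂) (R z) (R x)) y = 0) ∧
      ((k₁ • b₁ + k₂ • b₂)
          ((k₁ • b₁ + k₂ • b₂) (R x) (R y)
            + R ((k₁ • b₁ + k₂ • b₂) x (R y) + (k₁ • b₁ + k₂ • b₂) (R x) y)) z = 0) := by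
  intro k₁ k₂ x y z
  refine strong_aux _ (k₁ • C + k₂ • S) (hcompat k₁ k₂) R ?_ (hAPL k₁ k₂) x y z
  intro x y
  simp only [LinearMap.add_apply, LinearMap.smul_apply, hC, hS, smul_neg]
  abel
end

section
/- Let (𝔤,[-,-]₁,[-,-]₂) be a compatible Lie algebra and (ρ,μ,V) a representation of it. If T : V → 𝔤 is an invertible (bijective) anti-O-operator associated to (ρ,μ,V), then T is strong: for all k₁,k₂ ∈ ℂ and all u,v,w ∈ V, (k₁ρ+k₂μ)([T(u),T(v)]_{k})w + (k₁ρ+k₂μ)([T(v),T(w)]_{k})u + (k₁ρ+k₂μ)([T(w),T(u)]_{k})v = 0, where [-,-]_{k} = k₁[-,-]₁+k₂[-,-]₂. -/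
/-- An invertible anti-O-operator of a compatible Lie algebra
`(g,b₁,b₂)` associated to a representation `(ρ,μ,V)` is strong: for all `k₁,k₂` and
`u,v,w`, `(k₁ρ+k₂μ)([Tu,Tv]ₖ)w + (k₁ρ+k₂μ)([Tv,Tw]ₖ)u + (k₁ρ+k₂μ)([Tw,Tu]ₖ)v = 0`. -/
theorem invertible_antiO_is_strong {g V : Type*} [AddCommGroup g] [Module ℂ g]
    [AddCommGroup V] [Module ℂ V]
    (b₁ b₂ : g →ₗ[ℂ] g →ₗ[ℂ] g)
    (hcompat : ∀ k₁ k₂ : ℂ, IsLieBr (k₁ • b₁ + k₂ • b₂))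
    (ρ μ : g →ₗ[ℂ] V →ₗ[ℂ] V)
    (hrep : ∀ k₁ k₂ : ℂ, IsRep (k₁ • b₁ + k₂ • b₂) (k₁ • ρ + k₂ • μ))
    (T : V →ₗ[ℂ] g)
    (hT : ∀ k₁ k₂ : ℂ, IsAntiO (k₁ • b₁ + k₂ • b₂) (k₁ • ρ + k₂ • μ) T)
    (hinv : Function.Bijective T) :
    ∀ (k₁ k₂ : ℂ) (u v w : V),
      (k₁ • ρ + k₂ • μ) ((k₁ • b₁ + k₂ • b₂) (T u) (T v)) w
        + (k₁ • ρ + k₂ • μ) ((k₁ • b₁ + k₂ • b₂) (T v) (T w)) u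
        + (k₁ • ρ + k₂ • μ) ((k₁ • b₁ + k₂ • b₂) (T w) (T u)) v = 0 := by
  intro k₁ k₂ u v w
  have hc := (hcompat k₁ k₂).2
  have hr := hrep k₁ k₂
  have ht := hT k₁ k₂
  generalize k₁ • b₁ + k₂ • b₂ = b at *
  generalize k₁ • ρ + k₂ • μ = r at *
  have key : ∀ u v w : V, b (b (T u) (T v)) (T w)
      = T (r (T w) (r (T v) u) - r (T w) (r (T u) v) - r (b (T u) (T v)) w) := by
    intro u v w
    have h := ht (r (T v) u - r (T u) v) w
    rw [← ht u v] at h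
    rw [h, map_sub (r (T w))]
  have hrr : ∀ x y z, r (b x y) z = r x (r y z) - r y (r x z) := by
    intro x y z
    rw [hr x y]; rfl
  have hj := hc (T u) (T v) (T w)
  rw [key, key, key, ← map_add, ← map_add] at hj
  have h0 := hinv.1 (hj.trans (map_zero T).symm)
  have h1 := hrr (T u) (T v) w
  have h2 := hrr (T v) (T w) u
  have h3 := hrr (T w) (T u) v
  have h4 : (2 : ℂ) • (r (b (T u) (T v)) w + r (b (T v) (T w)) u + r (b (T w) (T u)) v) = 0 := by
    rw [← neg_eq_zero, ← h0, h1, h2, h3]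
    module
  exact (smul_eq_zero.mp h4).resolve_left two_ne_zero
end

section
/- Let (𝔤,[-,-]₁,[-,-]₂) be a finite-dimensional compatible Lie algebra over ℂ and B a nondegenerate symmetric bilinear form on 𝔤 that is a commutative 2-cocycle on both (𝔤,[-,-]₁) and (𝔤,[-,-]₂). Then there exist (unique) bilinear operations ∘ and ∗ on 𝔤 satisfying B(x∘y, z) = B(y, [x,z]₁) and B(x∗y, z) = B(y, [x,z]₂) for all x,y,z ∈ 𝔤, and (𝔤,∘,∗) is a compatible anti-pre-Lie algebra whose commutators recover the brackets: x∘y−y∘x = [x,y]₁ and x∗y−y∗x = [x,y]₂. -/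
theorem aux_exists {g : Type*} [AddCommGroup g] [Module ℂ g] [FiniteDimensional ℂ g]
    (b : g →ₗ[ℂ] g →ₗ[ℂ] g) (B : g →ₗ[ℂ] g →ₗ[ℂ] ℂ)
    (hnd : ∀ x : g, (∀ y : g, B x y = 0) → x = 0) :
    ∃ c : g →ₗ[ℂ] g →ₗ[ℂ] g, ∀ x y z : g, B (c x y) z = B y (b x z) := by
  have hinj : Function.Injective B := by
    rw [injective_iff_map_eq_zero]
    intro x hx
    exact hnd x (fun y => by rw [hx]; rfl)
  have hd : Module.finrank ℂ g = Module.finrank ℂ (g →ₗ[ℂ] ℂ) :=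
    (Subspace.dual_finrank_eq (K := ℂ) (V := g)).symm
  let e : g ≃ₗ[ℂ] (g →ₗ[ℂ] ℂ) := LinearEquiv.ofInjectiveOfFinrankEq B hinj hd
  have he : ∀ f, B (e.symm f) = f := fun f => e.apply_symm_apply f
  refine ⟨LinearMap.mk₂ ℂ (fun x y => e.symm ((B y).comp (b x))) ?_ ?_ ?_ ?_, ?_⟩
  · intro x y z; rw [← map_add]; congr 1; ext w; simp
  · intro k x y; rw [← map_smul]; congr 1; ext w; simp
  · intro x y z; rw [← map_add]; congr 1; ext w; simp
  · intro k x y; rw [← map_smul]; congr 1; ext w; simp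
  · intro x y z
    simp [he]

theorem aux_ext {g : Type*} [AddCommGroup g] [Module ℂ g]
    (B : g →ₗ[ℂ] g →ₗ[ℂ] ℂ)
    (hnd : ∀ x : g, (∀ y : g, B x y = 0) → x = 0) {x y : g}
    (h : ∀ z, B x z = B y z) : x = y := by
  apply sub_eq_zero.mp
  apply hnd
  intro z
  simp [h]

theorem aux_comm {g : Type*} [AddCommGroup g] [Module ℂ g]
    (b : g →ₗ[ℂ] g →ₗ[ℂ] g) (hb : ∀ x y : g, b x y = -b y x)
    (B : g →ₗ[ℂ] g →ₗ[ℂ] ℂ) (hsym : ∀ x y : g, B x y = B y x)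
    (hnd : ∀ x : g, (∀ y : g, B x y = 0) → x = 0)
    (hcoc : ∀ x y z : g, B (b x y) z + B (b y z) x + B (b z x) y = 0)
    (m : g →ₗ[ℂ] g →ₗ[ℂ] g) (hm : ∀ x y z : g, B (m x y) z = B y (b x z)) (x y : g) :
    m x y - m y x = b x y := by
  apply aux_ext B hnd
  intro z
  have h := hcoc x y z
  rw [hb z x] at h
  simp only [map_sub, map_neg, LinearMap.sub_apply, LinearMap.neg_apply, hm] at h ⊢
  rw [hsym y, hsym x]
  linear_combination -h

theorem aux_apl {g : Type*} [AddCommGroup g] [Module ℂ g]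
    (b : g →ₗ[ℂ] g →ₗ[ℂ] g) (hb : IsLieBr b)
    (B : g →ₗ[ℂ] g →ₗ[ℂ] ℂ) (hsym : ∀ x y : g, B x y = B y x)
    (hnd : ∀ x : g, (∀ y : g, B x y = 0) → x = 0)
    (hcoc : ∀ x y z : g, B (b x y) z + B (b y z) x + B (b z x) y = 0)
    (m : g →ₗ[ℂ] g →ₗ[ℂ] g) (hm : ∀ x y z : g, B (m x y) z = B y (b x z)) :
    IsAntiPreLie m := by
  obtain ⟨ha, hj⟩ := hb
  have hc := aux_comm b ha B hsym hnd hcoc m hm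
  have J : ∀ x y w, b (b x y) w = b x (b y w) - b y (b x w) := by
    intro x y w
    have h := hj x y w
    rw [ha (b y w) x, ha (b w x) y, ha w x, map_neg] at h
    rw [← sub_eq_zero, ← h]; abel
  refine ⟨fun x y z => ?_, fun x y z => ?_⟩
  · rw [hc]
    apply aux_ext B hnd
    intro w
    simp only [map_sub, LinearMap.sub_apply, hm, J]
  · simp only [hc]
    apply hnd
    intro w
    simp only [map_add, LinearMap.add_apply, hm]
    have key : ∀ x y z, B z (b (b x y) w) = - B (b w z) (b x y) - B (b z (b x y)) w := by
      intro x y z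
      have h := hcoc (b x y) w z
      rw [hsym z]; linear_combination h
    have hS : ∀ x y z, B (b w z) (b x y) = B x (b y (b z w)) - B y (b x (b z w)) := by
      intro x y z
      have h := hcoc x y (b z w)
      rw [ha (b z w) x] at h
      rw [ha w z, hsym, hsym x, hsym y]
      simp only [map_neg, LinearMap.neg_apply] at h ⊢
      linear_combination -h
    have hjw : B (b z (b x y)) w + B (b x (b y z)) w + B (b y (b z x)) w = 0 := by
      have h := congrArg (fun v => B v w) (hj x y z)
      simp only [ha (b _ _) _, map_add, LinearMap.add_apply, map_neg, LinearMap.neg_apply,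
        map_zero, LinearMap.zero_apply] at h
      linear_combination -h
    have k1 := key x y z
    have k2 := key y z x
    have k3 := key z x y
    rw [hS] at k1 k2 k3
    rw [J, map_sub] at k1 k2 k3 ⊢
    rw [J, map_sub, J, map_sub]
    linear_combination (1/2 : ℂ) * (k1 + k2 + k3 - hjw)

/-- Let `(g,b₁,b₂)` be a finite-dimensional compatible Lie algebra over
`ℂ` and `B` a nondegenerate symmetric bilinear form which is a commutative 2-cocycle
on both brackets. Then there exist unique bilinear operations `∘ = c`, `∗ = s` with
`B(x∘y,z) = B(y,[x,z]₁)` and `B(x∗y,z) = B(y,[x,z]₂)`, and `(g,∘,∗)` is a compatible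
anti-pre-Lie algebra whose commutators recover the brackets. -/
theorem nondegenerate_commutative_two_cocycle_gives_compatible_antiPreLie
    {g : Type*} [AddCommGroup g] [Module ℂ g] [FiniteDimensional ℂ g]
    (b₁ b₂ : g →ₗ[ℂ] g →ₗ[ℂ] g)
    (hcompat : ∀ k₁ k₂ : ℂ, IsLieBr (k₁ • b₁ + k₂ • b₂))
    (B : g →ₗ[ℂ] g →ₗ[ℂ] ℂ)
    (hsym : ∀ x y : g, B x y = B y x)
    (hnd : ∀ x : g, (∀ y : g, B x y = 0) → x = 0)
    (hcoc₁ : ∀ x y z : g, B (b₁ x y) z + B (b₁ y z) x + B (b₁ z x) y = 0)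
    (hcoc₂ : ∀ x y z : g, B (b₂ x y) z + B (b₂ y z) x + B (b₂ z x) y = 0) :
    ∃ c s : g →ₗ[ℂ] g →ₗ[ℂ] g,
      (∀ x y z : g, B (c x y) z = B y (b₁ x z)) ∧
      (∀ x y z : g, B (s x y) z = B y (b₂ x z)) ∧
      (∀ c' : g →ₗ[ℂ] g →ₗ[ℂ] g, (∀ x y z : g, B (c' x y) z = B y (b₁ x z)) → c' = c) ∧
      (∀ s' : g →ₗ[ℂ] g →ₗ[ℂ] g, (∀ x y z : g, B (s' x y) z = B y (b₂ x z)) → s' = s) ∧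
      (∀ k₁ k₂ : ℂ, IsAntiPreLie (k₁ • c + k₂ • s)) ∧
      (∀ x y : g, c x y - c y x = b₁ x y) ∧
      (∀ x y : g, s x y - s y x = b₂ x y) := by
  have hb₁ : ∀ x y, b₁ x y = - b₁ y x := by
    intro x y; simpa using (hcompat 1 0).1 x y
  have hb₂ : ∀ x y, b₂ x y = - b₂ y x := by
    intro x y; simpa using (hcompat 0 1).1 x y
  obtain ⟨c, hc⟩ := aux_exists b₁ B hnd
  obtain ⟨s, hs⟩ := aux_exists b₂ B hnd
  refine ⟨c, s, hc, hs, ?_, ?_, ?_, aux_comm b₁ hb₁ B hsym hnd hcoc₁ c hc,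
    aux_comm b₂ hb₂ B hsym hnd hcoc₂ s hs⟩
  · intro c' h
    ext x y
    exact aux_ext B hnd fun z => by rw [h, hc]
  · intro s' h
    ext x y
    exact aux_ext B hnd fun z => by rw [h, hs]
  · intro k₁ k₂
    refine aux_apl _ (hcompat k₁ k₂) B hsym hnd ?_ _ ?_
    · intro x y z
      simp only [LinearMap.add_apply, LinearMap.smul_apply, map_add, map_smul, smul_eq_mul]
      linear_combination k₁ * hcoc₁ x y z + k₂ * hcoc₂ x y z
    · intro x y z
      simp only [LinearMap.add_apply, LinearMap.smul_apply, map_add, map_smul, smul_eq_mul, hc, hs]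
end
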